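/- arXiv:0709.2466 — 3 statements merged into one kernel-verified Lean document; each statement's English description precedes it below -/
import Mathlib

section
/- Let A be an n×n quaternion matrix with A² = 0. Then A is unitarily similar to a direct sum of matrices, each of which is one of: the 2×2 matrix [[0, b],[0, 0]] with b a positive real number, or the 1×1 matrix [0]; moreover this direct sum is uniquely determined by A up to permutation of the summands. -/
open Matrix
open scoped Quaternion

noncomputable section

/-- A quaternion matrix `U` is unitary if `Uᴴ * U = 1`. -/
def IsUnitaryM {m : Type*} [Fintype m] [DecidableEq m] (U : Matrix m m ℍ[ℝ]) : Prop :=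
  Uᴴ * U = 1

/-- `A` and `B` are unitarily similar if `A = Uᴴ * B * U` for some unitary `U`. -/
def UnitarilySimilar {m : Type*} [Fintype m] [DecidableEq m] (A B : Matrix m m ℍ[ℝ]) : Prop :=
  ∃ U : Matrix m m ℍ[ℝ], IsUnitaryM U ∧ A = Uᴴ * B * U

/-- The direct sum of `p` blocks `[[0, b t],[0, 0]]` and `r` blocks `[0]`. -/
def nilCanon (p r : ℕ) (b : Fin p → ℝ) :
    Matrix ((Fin 2 × Fin p) ⊕ Fin r) ((Fin 2 × Fin p) ⊕ Fin r) ℍ[ℝ] :=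
  Matrix.fromBlocks (Matrix.blockDiagonal fun t => !![0, (b t : ℍ[ℝ]); 0, 0]) 0 0 0

/-!
Write `A = U * diag b * Vᴴ` with `b > 0` and `U`, `V` having orthonormal columns. Since
`A * A = 0` says that the column space of `A` is orthogonal to its row space, `Vᴴ * U = 0`, so the
columns of `U` and `V` together extend to a unitary matrix, in whose basis `A` has the canonical
form. Conversely, a canonical form exhibits such a singular value decomposition, so uniqueness
reduces to that of the singular values. If `V` and `V'` come from two decompositions of `A`, then
`W = V'ᴴ * V` is unitary and intertwines `diag (b * b)` with `diag (b' * b')`. The squared norms of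
its entries form a doubly stochastic matrix, whose support contains a permutation `σ` by Birkhoff's
theorem, and `W (σ i) i ≠ 0` forces `b i = b' (σ i)`.
-/

section MatrixProducts

variable {ι κ l m R : Type*} [DecidableEq ι]

theorem matrix_mul_cancel_left [Fintype ι] [Fintype κ] [Semiring R] {A : Matrix ι κ R}
    {B : Matrix κ ι R} (h : A * B = 1) (C : Matrix ι l R) : A * (B * C) = C := by
  rw [← Matrix.mul_assoc, h, Matrix.one_mul]

theorem card_le_of_matrix_mul_eq_one [Fintype ι] [Fintype κ] [Semiring R] [RankCondition R]
    {A : Matrix ι κ R} {B : Matrix κ ι R} (h : A * B = 1) : Fintype.card ι ≤ Fintype.card κ := by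
  let e := Fintype.equivFin ι
  let f := Fintype.equivFin κ
  refine rankCondition_iff_matrix.1 ‹_› _ _
    (B.submatrix f.symm e.symm) (A.submatrix e.symm f.symm) ?_
  rw [submatrix_mul_equiv, h, submatrix_one_equiv]

theorem card_eq_of_matrix_mul_eq_one [DecidableEq κ] [Fintype ι] [Fintype κ] [Semiring R]
    [RankCondition R] {A : Matrix ι κ R} {B : Matrix κ ι R} (hAB : A * B = 1) (hBA : B * A = 1) :
    Fintype.card ι = Fintype.card κ :=
  (card_le_of_matrix_mul_eq_one hAB).antisymm (card_le_of_matrix_mul_eq_one hBA)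

theorem conjTranspose_mul_self_submatrix_id [DecidableEq κ] [Fintype m] [NonAssocSemiring R]
    [StarRing R] {F : Matrix m κ R} (hF : Fᴴ * F = 1) {f : ι → κ} (hf : f.Injective) :
    (F.submatrix id f)ᴴ * F.submatrix id f = 1 := by
  rw [conjTranspose_submatrix, ← submatrix_mul _ _ _ _ _ Function.bijective_id, hF,
    submatrix_one _ hf]

theorem conjTranspose_mul_self_fromCols [DecidableEq κ] [Fintype m] [Semiring R]
    [StarRing R] {F : Matrix m ι R} {G : Matrix m κ R} (hF : Fᴴ * F = 1) (hG : Gᴴ * G = 1)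
    (hGF : Gᴴ * F = 0) : (fromCols F G)ᴴ * fromCols F G = 1 := by
  have hFG : Fᴴ * G = 0 := by simpa using congrArg conjTranspose hGF
  rw [conjTranspose_fromCols_eq_fromRows_conjTranspose, fromRows_mul_fromCols, hF, hG, hGF, hFG,
    fromBlocks_one]

end MatrixProducts

instance instStarModuleRealQuaternion : StarModule ℝ ℍ[ℝ] :=
  ⟨Quaternion.star_smul⟩

section Inner

variable {l m : Type*} [Fintype m]

theorem star_dotProduct_self_eq_sum_norm_sq (x : m → ℍ[ℝ]) :
    star x ⬝ᵥ x = ((∑ i, ‖x i‖ ^ 2 : ℝ) : ℍ[ℝ]) := by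
  have hcoe : ((∑ i, ‖x i‖ ^ 2 : ℝ) : ℍ[ℝ]) = ∑ i, ((‖x i‖ ^ 2 : ℝ) : ℍ[ℝ]) :=
    map_sum (algebraMap ℝ ℍ[ℝ]) _ _
  rw [hcoe]
  simp [dotProduct, Quaternion.star_mul_self, Quaternion.normSq_eq_norm_mul_self, sq]

theorem conjTranspose_mul_self_apply_self (A : Matrix m l ℍ[ℝ]) (j : l) :
    (Aᴴ * A) j j = ((∑ i, ‖A i j‖ ^ 2 : ℝ) : ℍ[ℝ]) :=
  star_dotProduct_self_eq_sum_norm_sq fun i => A i j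

theorem eq_zero_of_conjTranspose_mul_self_eq_zero {A : Matrix m l ℍ[ℝ]} (h : Aᴴ * A = 0) :
    A = 0 := by
  ext1 i j
  have hj : ∑ i, ‖A i j‖ ^ 2 = 0 := by
    rw [← Quaternion.coe_inj, ← conjTranspose_mul_self_apply_self, h]
    rfl
  rw [Finset.sum_eq_zero_iff_of_nonneg fun _ _ => sq_nonneg _] at hj
  simpa using hj i (Finset.mem_univ i)

theorem mul_eq_zero_of_conjTranspose_mul_self_mul_eq_zero {n : Type*} [Fintype l]
    {A : Matrix l m ℍ[ℝ]} {B : Matrix m n ℍ[ℝ]} (h : Aᴴ * A * B = 0) : A * B = 0 := by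
  refine eq_zero_of_conjTranspose_mul_self_eq_zero ?_
  rw [conjTranspose_mul, Matrix.mul_assoc, ← Matrix.mul_assoc Aᴴ, h, Matrix.mul_zero]

theorem exists_real_smul_star_dotProduct_self_eq_one {x : m → ℍ[ℝ]} (hx : x ≠ 0) :
    ∃ r : ℝ, star (r • x) ⬝ᵥ (r • x) = 1 := by
  set s : ℝ := ∑ i, ‖x i‖ ^ 2
  have hs : 0 < s := by
    obtain ⟨i, hi⟩ := Function.ne_iff.1 hx
    exact Finset.sum_pos' (fun _ _ => sq_nonneg _)
      ⟨i, Finset.mem_univ i, pow_pos (norm_pos_iff.2 hi) 2⟩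
  refine ⟨(√s)⁻¹, ?_⟩
  rw [star_smul, star_trivial, smul_dotProduct, dotProduct_smul,
    star_dotProduct_self_eq_sum_norm_sq, smul_smul, ← mul_inv, Real.mul_self_sqrt hs.le,
    ← Quaternion.coe_smul, smul_eq_mul, inv_mul_cancel₀ hs.ne', Quaternion.coe_one]

theorem inner_toLp_eq_re_star_dotProduct (x y : m → ℍ[ℝ]) :
    inner ℝ (WithLp.toLp 2 x) (WithLp.toLp 2 y) = (star x ⬝ᵥ y).re := by
  have hre : (star x ⬝ᵥ y).re = ∑ i, (star (x i) * y i).re :=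
    map_sum (QuaternionAlgebra.reₗ _ _ _ : ℍ[ℝ] →ₗ[ℝ] ℝ) _ _
  simp [PiLp.inner_apply, hre, Quaternion.inner_def]

/-- Left multiplication by a quaternion matrix, as a linear map between the *real* inner product
spaces `ℍᵐ` and `ℍˡ`, to which the real spectral theorem applies. -/
def realMulVecLin (A : Matrix l m ℍ[ℝ]) :
    PiLp 2 (fun _ : m => ℍ[ℝ]) →ₗ[ℝ] PiLp 2 (fun _ : l => ℍ[ℝ]) where
  toFun x := WithLp.toLp 2 (A *ᵥ x.ofLp)
  map_add' x y := congrArg (WithLp.toLp 2) (mulVec_add A x.ofLp y.ofLp)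
  map_smul' r x := congrArg (WithLp.toLp 2) (mulVec_smul A r x.ofLp)

theorem isSymmetric_realMulVecLin {H : Matrix m m ℍ[ℝ]} (hH : H.IsHermitian) :
    (realMulVecLin H).IsSymmetric := by
  intro x y
  change inner ℝ (WithLp.toLp 2 (H *ᵥ x.ofLp)) (WithLp.toLp 2 y.ofLp)
    = inner ℝ (WithLp.toLp 2 x.ofLp) (WithLp.toLp 2 (H *ᵥ y.ofLp))
  rw [inner_toLp_eq_re_star_dotProduct, inner_toLp_eq_re_star_dotProduct, star_mulVec,
    hH.eq, dotProduct_mulVec]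

theorem eq_zero_of_forall_eigenvector_mulVec_eq_zero {H : Matrix m m ℍ[ℝ]} (hH : H.IsHermitian)
    {B : Matrix l m ℍ[ℝ]} (hB : ∀ (μ : ℝ) (x : m → ℍ[ℝ]), H *ᵥ x = μ • x → B *ᵥ x = 0) :
    B = 0 := by
  have hspan : ⨆ μ, Module.End.eigenspace (realMulVecLin H) μ = ⊤ :=
    Submodule.orthogonal_eq_bot_iff.1
      (isSymmetric_realMulVecLin hH).orthogonalComplement_iSup_eigenspaces_eq_bot
  have hker : (⊤ : Submodule ℝ _) ≤ LinearMap.ker (realMulVecLin B) := by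
    rw [← hspan]
    refine iSup_le fun μ x hx => congrArg (WithLp.toLp 2) (hB μ x.ofLp ?_)
    exact congrArg WithLp.ofLp (Module.End.mem_eigenspace_iff.1 hx)
  refine mulVec_injective (funext fun x => ?_)
  rw [zero_mulVec]
  exact congrArg WithLp.ofLp (hker (Submodule.mem_top (x := WithLp.toLp 2 x)))

end Inner

section RealDiagonal

variable {ι : Type*} [DecidableEq ι]

/-- The quaternion diagonal matrix with the given real diagonal entries. -/
def realDiagonal (d : ι → ℝ) : Matrix ι ι ℍ[ℝ] :=
  diagonal fun i => (d i : ℍ[ℝ])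

theorem realDiagonal_injective : Function.Injective (realDiagonal (ι := ι)) := fun _ _ h =>
  funext fun i => Quaternion.coe_injective (congrFun (diagonal_injective h) i)

theorem realDiagonal_one : realDiagonal (1 : ι → ℝ) = 1 := by
  simp [realDiagonal]

theorem conjTranspose_realDiagonal (d : ι → ℝ) : (realDiagonal d)ᴴ = realDiagonal d := by
  simp [realDiagonal, diagonal_conjTranspose, Pi.star_def]

theorem realDiagonal_mul_realDiagonal [Fintype ι] (d d' : ι → ℝ) :
    realDiagonal d * realDiagonal d' = realDiagonal (d * d') := by
  simp [realDiagonal]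

theorem realDiagonal_inv_mul [Fintype ι] {d : ι → ℝ} (hd : ∀ i, d i ≠ 0) :
    realDiagonal d⁻¹ * realDiagonal d = 1 := by
  rw [realDiagonal_mul_realDiagonal, ← realDiagonal_one]
  exact congrArg _ (funext fun i => inv_mul_cancel₀ (hd i))

theorem realDiagonal_mul_inv [Fintype ι] {d : ι → ℝ} (hd : ∀ i, d i ≠ 0) :
    realDiagonal d * realDiagonal d⁻¹ = 1 := by
  rw [realDiagonal_mul_realDiagonal, ← realDiagonal_one]
  exact congrArg _ (funext fun i => mul_inv_cancel₀ (hd i))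

end RealDiagonal

section Spectral

variable {m : Type*} [Fintype m]

theorem exists_unit_eigenvector_orthogonal {ι : Type*} [Fintype ι] [DecidableEq ι]
    {H : Matrix m m ℍ[ℝ]} (hH : H.IsHermitian) {G : Matrix m ι ℍ[ℝ]} {d : ι → ℝ}
    (hG : Gᴴ * G = 1) (hHG : H * G = G * realDiagonal d) (hne : H ≠ G * realDiagonal d * Gᴴ) :
    ∃ (μ : ℝ) (x : m → ℍ[ℝ]), μ ≠ 0 ∧ star x ⬝ᵥ x = 1 ∧ Gᴴ *ᵥ x = 0 ∧ H *ᵥ x = μ • x := by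
  -- `K` is `H` deflated by the eigenpairs in `G` and `d`: an eigenvector of `K` with nonzero
  -- eigenvalue is orthogonal to the columns of `G`, hence also an eigenvector of `H`.
  set K := H - G * realDiagonal d * Gᴴ with hK
  have hK_herm : K.IsHermitian := hH.sub <| by
    simp only [IsHermitian, conjTranspose_mul, conjTranspose_conjTranspose,
      conjTranspose_realDiagonal, Matrix.mul_assoc]
  have hGK : Gᴴ * K = 0 := by
    have hGH : Gᴴ * H = realDiagonal d * Gᴴ := by
      simpa [hH.eq, conjTranspose_realDiagonal] using congrArg conjTranspose hHG
    rw [hK, Matrix.mul_sub, hGH, ← Matrix.mul_assoc, ← Matrix.mul_assoc, hG,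
      Matrix.one_mul, sub_self]
  obtain ⟨μ, x, hx, hKx⟩ : ∃ (μ : ℝ) (x : m → ℍ[ℝ]), K *ᵥ x = μ • x ∧ K *ᵥ x ≠ 0 := by
    by_contra! h
    exact hne (sub_eq_zero.1 (eq_zero_of_forall_eigenvector_mulVec_eq_zero hK_herm h))
  have hμx : μ ≠ 0 ∧ x ≠ 0 := by rwa [hx, smul_ne_zero_iff] at hKx
  have hGx : Gᴴ *ᵥ x = 0 := by
    refine (smul_eq_zero.1 ?_).resolve_left hμx.1
    rw [← mulVec_smul, ← hx, mulVec_mulVec, hGK, zero_mulVec]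
  have hHx : H *ᵥ x = μ • x := by
    rw [← hx, hK, sub_mulVec, ← mulVec_mulVec, hGx, mulVec_zero, sub_zero]
  obtain ⟨r, hr⟩ := exists_real_smul_star_dotProduct_self_eq_one hμx.2
  exact ⟨μ, r • x, hμx.1, hr, by rw [mulVec_smul, hGx, smul_zero],
    by rw [mulVec_smul, hHx, smul_comm]⟩

variable {k : ℕ}

/-- Prepends the column `x` to the matrix `G`. -/
def consCol (x : m → ℍ[ℝ]) (G : Matrix m (Fin k) ℍ[ℝ]) : Matrix m (Fin (k + 1)) ℍ[ℝ] :=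
  Matrix.of fun i => Fin.cons (x i) (G i)

theorem conjTranspose_mul_self_consCol {x : m → ℍ[ℝ]} {G : Matrix m (Fin k) ℍ[ℝ]}
    (hx : star x ⬝ᵥ x = 1) (hGx : Gᴴ *ᵥ x = 0) (hG : Gᴴ * G = 1) :
    (consCol x G)ᴴ * consCol x G = 1 := by
  have hcol (i : Fin k) : star (Gᵀ i) ⬝ᵥ x = 0 := congrFun hGx i
  have hcol' (i : Fin k) : star x ⬝ᵥ Gᵀ i = 0 := by rw [star_dotProduct, hcol, star_zero]
  have hcols (i j : Fin k) : star (Gᵀ i) ⬝ᵥ Gᵀ j = (1 : Matrix (Fin k) (Fin k) ℍ[ℝ]) i j :=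
    congrFun₂ hG i j
  have hzero : (consCol x G)ᵀ 0 = x := rfl
  have hsucc (i : Fin k) : (consCol x G)ᵀ i.succ = Gᵀ i := rfl
  ext1 i j
  change star ((consCol x G)ᵀ i) ⬝ᵥ (consCol x G)ᵀ j = _
  cases i using Fin.cases <;> cases j using Fin.cases <;>
    simp [hzero, hsucc, hx, hcol, hcol', hcols, one_apply, (Fin.succ_ne_zero _).symm]

theorem mul_consCol {H : Matrix m m ℍ[ℝ]} {x : m → ℍ[ℝ]} {μ : ℝ} {G : Matrix m (Fin k) ℍ[ℝ]}
    {d : Fin k → ℝ} (hx : H *ᵥ x = μ • x) (hG : H * G = G * realDiagonal d) :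
    H * consCol x G = consCol x G * realDiagonal (Fin.cons μ d) := by
  ext1 i j
  rw [realDiagonal, mul_diagonal, Quaternion.mul_coe_eq_smul]
  cases j using Fin.cases with
  | zero => exact congrFun hx i
  | succ j =>
    have h := congrFun₂ hG i j
    rwa [realDiagonal, mul_diagonal, Quaternion.mul_coe_eq_smul] at h

theorem exists_spectral_decomposition {H : Matrix m m ℍ[ℝ]} (hH : H.IsHermitian) :
    ∃ (k : ℕ) (G : Matrix m (Fin k) ℍ[ℝ]) (d : Fin k → ℝ),
      (∀ i, d i ≠ 0) ∧ Gᴴ * G = 1 ∧ H = G * realDiagonal d * Gᴴ := by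
  by_contra! hno
  have hfamily (k : ℕ) : ∃ (G : Matrix m (Fin k) ℍ[ℝ]) (d : Fin k → ℝ),
      (∀ i, d i ≠ 0) ∧ Gᴴ * G = 1 ∧ H * G = G * realDiagonal d := by
    induction k with
    | zero => exact ⟨0, 0, fun i => i.elim0, Subsingleton.elim _ _, Matrix.ext fun _ j => j.elim0⟩
    | succ k ih =>
      obtain ⟨G, d, hd, hG, hHG⟩ := ih
      obtain ⟨μ, x, hμ, hx, hGx, hHx⟩ :=
        exists_unit_eigenvector_orthogonal hH hG hHG (hno k G d hd hG)
      exact ⟨consCol x G, Fin.cons μ d, Fin.cases hμ hd, conjTranspose_mul_self_consCol hx hGx hG,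
        mul_consCol hHx hHG⟩
  obtain ⟨G, -, -, hG, -⟩ := hfamily (Fintype.card m + 1)
  simpa using card_le_of_matrix_mul_eq_one hG

theorem exists_isometry_of_isIdempotentElem {P : Matrix m m ℍ[ℝ]} (hP : P.IsHermitian)
    (hP' : IsIdempotentElem P) :
    ∃ (k : ℕ) (G : Matrix m (Fin k) ℍ[ℝ]), Gᴴ * G = 1 ∧ G * Gᴴ = P := by
  obtain ⟨k, G, d, hd, hG, hPG⟩ := exists_spectral_decomposition hP
  have hcompress : Gᴴ * P * G = realDiagonal d := by
    simp only [hPG, Matrix.mul_assoc, hG, Matrix.mul_one]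
    rw [← Matrix.mul_assoc, hG, Matrix.one_mul]
  have hd_mul : d * d = d := realDiagonal_injective <| by
    calc realDiagonal (d * d) = Gᴴ * (P * P) * G := by
          rw [← realDiagonal_mul_realDiagonal, hPG]
          simp only [Matrix.mul_assoc, hG, Matrix.mul_one]
          simp only [← Matrix.mul_assoc, hG, Matrix.one_mul]
      _ = realDiagonal d := by rw [hP'.eq, hcompress]
  have hd_one : d = 1 := funext fun i => mul_left_cancel₀ (hd i) (by simpa using congrFun hd_mul i)
  exact ⟨k, G, hG, by rw [hPG, hd_one, realDiagonal_one, Matrix.mul_one]⟩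

end Spectral

section Support

variable {ι κ : Type*} [Fintype ι] [DecidableEq ι] [Fintype κ] [DecidableEq κ]

theorem exists_perm_forall_apply_ne_zero_of_mem_doublyStochastic {R : Type*} [Field R]
    [LinearOrder R] [IsStrictOrderedRing R] {M : Matrix ι ι R} (hM : M ∈ doublyStochastic R ι) :
    ∃ σ : Equiv.Perm ι, ∀ i, M i (σ i) ≠ 0 := by
  obtain ⟨w, hw_nonneg, hw_sum, rfl⟩ := exists_eq_sum_perm_of_mem_doublyStochastic hM
  obtain ⟨σ, -, hσ⟩ : ∃ σ ∈ Finset.univ, w σ ≠ 0 :=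
    Finset.exists_ne_zero_of_sum_ne_zero (hw_sum.trans_ne one_ne_zero)
  refine ⟨σ, fun i => ne_of_gt ?_⟩
  rw [Matrix.sum_apply]
  refine Finset.sum_pos' (fun τ _ => ?_) ⟨σ, Finset.mem_univ σ, ?_⟩
  · exact mul_nonneg (hw_nonneg τ) (nonneg_of_mem_doublyStochastic permMatrix_mem_doublyStochastic)
  · simpa [PEquiv.toMatrix_apply] using (hw_nonneg σ).lt_of_ne' hσ

theorem norm_sq_mem_doublyStochastic {U : Matrix ι ι ℍ[ℝ]} (hU : IsUnitaryM U) :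
    (Matrix.of fun i j => ‖U i j‖ ^ 2) ∈ doublyStochastic ℝ ι := by
  have hU' : U * Uᴴ = 1 := mul_eq_one_comm.1 hU
  refine mem_doublyStochastic_iff_sum.2 ⟨fun _ _ => sq_nonneg _, fun i => ?_, fun j => ?_⟩
  · rw [← Quaternion.coe_inj]
    simpa [hU'] using (conjTranspose_mul_self_apply_self Uᴴ i).symm
  · rw [← Quaternion.coe_inj]
    simpa [show Uᴴ * U = 1 from hU] using (conjTranspose_mul_self_apply_self U j).symm

theorem exists_equiv_forall_apply_ne_zero {W : Matrix κ ι ℍ[ℝ]} (hW : Wᴴ * W = 1)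
    (hW' : W * Wᴴ = 1) : ∃ σ : ι ≃ κ, ∀ j, W (σ j) j ≠ 0 := by
  let e : ι ≃ κ := Fintype.equivOfCardEq (card_eq_of_matrix_mul_eq_one hW hW')
  have hU : IsUnitaryM (Wᴴ.submatrix id e) := by
    rw [IsUnitaryM, conjTranspose_submatrix, conjTranspose_conjTranspose,
      ← submatrix_mul _ _ _ _ _ Function.bijective_id, hW', submatrix_one_equiv]
  obtain ⟨σ, hσ⟩ := exists_perm_forall_apply_ne_zero_of_mem_doublyStochastic
    (norm_sq_mem_doublyStochastic hU)
  refine ⟨σ.trans e, fun j h => hσ j ?_⟩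
  rw [Equiv.trans_apply] at h
  simp [h]

end Support

/-- A compact singular value decomposition `A = U * diag b * Vᴴ`: only the positive singular values
are kept, so `U` and `V` have orthonormal columns but need not be square. -/
structure IsCompactSVD {l m ι : Type*} [Fintype l] [Fintype m] [Fintype ι] [DecidableEq ι]
    (A : Matrix l m ℍ[ℝ]) (U : Matrix l ι ℍ[ℝ]) (b : ι → ℝ) (V : Matrix m ι ℍ[ℝ]) : Prop where
  left_isometry : Uᴴ * U = 1
  right_isometry : Vᴴ * V = 1
  pos : ∀ i, 0 < b i
  eq_mul : A = U * realDiagonal b * Vᴴ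

theorem nonneg_of_conjTranspose_mul_self_eq_realDiagonal {l ι : Type*} [Fintype l] [DecidableEq ι]
    {B : Matrix l ι ℍ[ℝ]} {d : ι → ℝ} (h : Bᴴ * B = realDiagonal d) (i : ι) : 0 ≤ d i := by
  have hdi : ∑ j, ‖B j i‖ ^ 2 = d i := by
    rw [← Quaternion.coe_inj, ← conjTranspose_mul_self_apply_self, h, realDiagonal,
      diagonal_apply_eq]
  exact hdi ▸ Finset.sum_nonneg fun _ _ => sq_nonneg _

theorem exists_isCompactSVD {l m : Type*} [Fintype l] [Fintype m] (A : Matrix l m ℍ[ℝ]) :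
    ∃ (k : ℕ) (U : Matrix l (Fin k) ℍ[ℝ]) (b : Fin k → ℝ) (V : Matrix m (Fin k) ℍ[ℝ]),
      IsCompactSVD A U b V := by
  classical
  obtain ⟨k, V, d, hd, hV, hAA⟩ :=
    exists_spectral_decomposition (isHermitian_conjTranspose_mul_self A)
  have hgram : (A * V)ᴴ * (A * V) = realDiagonal d := by
    rw [conjTranspose_mul, Matrix.mul_assoc, ← Matrix.mul_assoc Aᴴ, hAA]
    simp only [Matrix.mul_assoc, hV, Matrix.mul_one, matrix_mul_cancel_left hV]
  have hd_pos (i : Fin k) : 0 < d i :=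
    (nonneg_of_conjTranspose_mul_self_eq_realDiagonal hgram i).lt_of_ne' (hd i)
  obtain ⟨b, hb_pos, rfl⟩ : ∃ b : Fin k → ℝ, (∀ i, 0 < b i) ∧ b * b = d :=
    ⟨fun i => √(d i), fun i => Real.sqrt_pos.2 (hd_pos i),
      funext fun i => Real.mul_self_sqrt (hd_pos i).le⟩
  have hb_inv := realDiagonal_inv_mul fun i => (hb_pos i).ne'
  have hAV : A * (1 - V * Vᴴ) = 0 := by
    refine mul_eq_zero_of_conjTranspose_mul_self_mul_eq_zero ?_
    simp only [hAA, Matrix.mul_sub, Matrix.mul_one, Matrix.mul_assoc, matrix_mul_cancel_left hV,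
      sub_self]
  refine ⟨k, A * V * realDiagonal b⁻¹, b, V, ?_, hV, hb_pos, ?_⟩
  · rw [conjTranspose_mul, conjTranspose_realDiagonal, Matrix.mul_assoc,
      ← Matrix.mul_assoc (A * V)ᴴ, hgram, ← realDiagonal_mul_realDiagonal, Matrix.mul_assoc,
      realDiagonal_mul_inv fun i => (hb_pos i).ne', Matrix.mul_one, hb_inv]
  · rw [Matrix.mul_assoc (A * V), hb_inv, Matrix.mul_one, Matrix.mul_assoc]
    rwa [Matrix.mul_sub, Matrix.mul_one, sub_eq_zero] at hAV

namespace IsCompactSVD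

variable {l m ι κ : Type*} [Fintype l] [Fintype m] [Fintype ι] [DecidableEq ι] [Fintype κ]
  [DecidableEq κ] {A : Matrix l m ℍ[ℝ]} {U : Matrix l ι ℍ[ℝ]} {b : ι → ℝ} {V : Matrix m ι ℍ[ℝ]}
  {U' : Matrix l κ ℍ[ℝ]} {b' : κ → ℝ} {V' : Matrix m κ ℍ[ℝ]}

theorem conjTranspose_mul_self (h : IsCompactSVD A U b V) :
    Aᴴ * A = V * realDiagonal (b * b) * Vᴴ := by
  simp only [h.eq_mul, conjTranspose_mul, conjTranspose_conjTranspose, conjTranspose_realDiagonal,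
    Matrix.mul_assoc, matrix_mul_cancel_left h.left_isometry, ← realDiagonal_mul_realDiagonal]

theorem conjTranspose_mul_self_mul_right (h : IsCompactSVD A U b V) :
    Aᴴ * A * V = V * realDiagonal (b * b) := by
  rw [h.conjTranspose_mul_self, Matrix.mul_assoc, h.right_isometry, Matrix.mul_one]

theorem inv_mul_left_mul_self (h : IsCompactSVD A U b V) :
    realDiagonal b⁻¹ * Uᴴ * A = Vᴴ := by
  rw [h.eq_mul]
  simp only [Matrix.mul_assoc, matrix_mul_cancel_left h.left_isometry,
    matrix_mul_cancel_left (realDiagonal_inv_mul fun i => (h.pos i).ne')]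

theorem mul_right_mul_inv (h : IsCompactSVD A U b V) :
    A * V * realDiagonal b⁻¹ = U := by
  rw [h.eq_mul]
  simp only [Matrix.mul_assoc, matrix_mul_cancel_left h.right_isometry,
    realDiagonal_mul_inv fun i => (h.pos i).ne', Matrix.mul_one]

theorem mul_right_mul_conjTranspose_right (h : IsCompactSVD A U b V) : A * (V * Vᴴ) = A := by
  rw [h.eq_mul]
  simp only [Matrix.mul_assoc, matrix_mul_cancel_left h.right_isometry]

theorem conjTranspose_right_mul_projection_right (h : IsCompactSVD A U b V)
    (h' : IsCompactSVD A U' b' V') : Vᴴ * (V' * V'ᴴ) = Vᴴ := by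
  rw [← h.inv_mul_left_mul_self, Matrix.mul_assoc, h'.mul_right_mul_conjTranspose_right]

theorem conjTranspose_right_mul_right_isometry (h : IsCompactSVD A U b V)
    (h' : IsCompactSVD A U' b' V') : (V'ᴴ * V)ᴴ * (V'ᴴ * V) = 1 := by
  rw [conjTranspose_mul, conjTranspose_conjTranspose, ← Matrix.mul_assoc, Matrix.mul_assoc Vᴴ,
    h.conjTranspose_right_mul_projection_right h', h.right_isometry]

theorem exists_equiv_eq_comp (h : IsCompactSVD A U b V) (h' : IsCompactSVD A U' b' V') :
    ∃ σ : ι ≃ κ, ∀ i, b i = b' (σ i) := by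
  set W := V'ᴴ * V with hW
  have hWV : Wᴴ = Vᴴ * V' := by rw [hW, conjTranspose_mul, conjTranspose_conjTranspose]
  have hcomm : W * realDiagonal (b * b) = realDiagonal (b' * b') * W := by
    have hgram' : V'ᴴ * (Aᴴ * A) = realDiagonal (b' * b') * V'ᴴ := by
      rw [h'.conjTranspose_mul_self, Matrix.mul_assoc, matrix_mul_cancel_left h'.right_isometry]
    rw [hW, Matrix.mul_assoc, ← h.conjTranspose_mul_self_mul_right, ← Matrix.mul_assoc, hgram',
      Matrix.mul_assoc]
  obtain ⟨σ, hσ⟩ := exists_equiv_forall_apply_ne_zero (h.conjTranspose_right_mul_right_isometry h')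
    (by simpa [hWV] using h'.conjTranspose_right_mul_right_isometry h)
  refine ⟨σ, fun i => ?_⟩
  have hentry : (b i * b i) • W (σ i) i = (b' (σ i) * b' (σ i)) • W (σ i) i := by
    simpa [← smul_smul, realDiagonal, mul_diagonal, diagonal_mul, Quaternion.mul_coe_eq_smul,
      Quaternion.coe_mul_eq_smul] using congrFun₂ hcomm (σ i) i
  exact (mul_self_inj (h.pos i).le (h'.pos (σ i)).le).1 (smul_left_injective ℝ (hσ i) hentry)

theorem conjTranspose_right_mul_left_eq_zero {A : Matrix m m ℍ[ℝ]} {U V : Matrix m ι ℍ[ℝ]}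
    (h : IsCompactSVD A U b V) (hA : A * A = 0) : Vᴴ * U = 0 := by
  rw [← h.inv_mul_left_mul_self, ← h.mul_right_mul_inv]
  simp only [Matrix.mul_assoc]
  rw [← Matrix.mul_assoc A A, hA, Matrix.zero_mul, Matrix.mul_zero, Matrix.mul_zero]

end IsCompactSVD

theorem exists_fromCols_unitary {m ι : Type*} [Fintype m] [DecidableEq m] [Fintype ι]
    [DecidableEq ι] {F : Matrix m ι ℍ[ℝ]} (hF : Fᴴ * F = 1) :
    ∃ (r : ℕ) (G : Matrix m (Fin r) ℍ[ℝ]),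
      (fromCols F G)ᴴ * fromCols F G = 1 ∧ fromCols F G * (fromCols F G)ᴴ = 1 := by
  have hherm : (1 - F * Fᴴ).IsHermitian :=
    isHermitian_one.sub (isHermitian_mul_conjTranspose_self F)
  have hidem : IsIdempotentElem (1 - F * Fᴴ) := IsIdempotentElem.one_sub <| by
    rw [IsIdempotentElem, Matrix.mul_assoc, matrix_mul_cancel_left hF]
  obtain ⟨r, G, hG, hGG⟩ := exists_isometry_of_isIdempotentElem hherm hidem
  have hGF : Gᴴ * F = 0 := by
    calc Gᴴ * F = Gᴴ * (G * Gᴴ * F) := by rw [Matrix.mul_assoc, matrix_mul_cancel_left hG]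
      _ = 0 := by
        rw [hGG, Matrix.sub_mul, Matrix.one_mul, Matrix.mul_assoc, hF, Matrix.mul_one, sub_self,
          Matrix.mul_zero]
  refine ⟨r, G, conjTranspose_mul_self_fromCols hF hG hGF, ?_⟩
  rw [conjTranspose_fromCols_eq_fromRows_conjTranspose, fromCols_mul_fromRows, hGG,
    add_sub_cancel]

section CanonicalForm

theorem mul_nilCanon_mul_conjTranspose {m : Type*} {p r : ℕ} {b : Fin p → ℝ}
    (W : Matrix m ((Fin 2 × Fin p) ⊕ Fin r) ℍ[ℝ]) :
    W * nilCanon p r b * Wᴴ =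
      W.submatrix id (fun t => .inl (0, t)) * realDiagonal b *
        (W.submatrix id (fun t => .inl (1, t)))ᴴ := by
  ext1 i j
  simp [nilCanon, realDiagonal, Matrix.mul_apply, Fintype.sum_prod_type, fromBlocks,
    blockDiagonal_apply, diagonal_apply]

variable {m : Type*} [Fintype m] [DecidableEq m]

theorem unitarilySimilar_submatrix_iff {κ : Type*} [Fintype κ] [DecidableEq κ] (e : κ ≃ m)
    {A : Matrix m m ℍ[ℝ]} {N : Matrix κ κ ℍ[ℝ]} :
    UnitarilySimilar A (N.submatrix e.symm e.symm) ↔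
      ∃ W : Matrix m κ ℍ[ℝ], Wᴴ * W = 1 ∧ A = W * N * Wᴴ := by
  constructor
  · rintro ⟨U, hU, rfl⟩
    refine ⟨Uᴴ.submatrix id e, ?_, ?_⟩
    · rw [conjTranspose_submatrix, conjTranspose_conjTranspose,
        ← submatrix_mul _ _ _ _ _ Function.bijective_id, mul_eq_one_comm.1 hU, submatrix_one_equiv]
    · ext1 i j
      simp [Matrix.mul_apply, ← e.sum_comp]
  · rintro ⟨W, hW, rfl⟩
    refine ⟨Wᴴ.submatrix e.symm id, ?_, ?_⟩
    · rw [IsUnitaryM, conjTranspose_submatrix, conjTranspose_conjTranspose,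
        submatrix_mul_equiv, (mul_eq_one_comm_of_equiv e).1 hW, submatrix_id_id]
    · rw [conjTranspose_submatrix, conjTranspose_conjTranspose, submatrix_mul_equiv,
        submatrix_mul_equiv, submatrix_id_id]

variable {p r : ℕ} {b : Fin p → ℝ}

theorem exists_isCompactSVD_of_unitarilySimilar_nilCanon {A : Matrix m m ℍ[ℝ]}
    {e : ((Fin 2 × Fin p) ⊕ Fin r) ≃ m} (hb : ∀ t, 0 < b t)
    (hA : UnitarilySimilar A ((nilCanon p r b).submatrix e.symm e.symm)) :
    ∃ U V : Matrix m (Fin p) ℍ[ℝ], IsCompactSVD A U b V := by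
  obtain ⟨W, hW, rfl⟩ := (unitarilySimilar_submatrix_iff e).1 hA
  have hinj (i : Fin 2) :
      Function.Injective fun t : Fin p => (.inl (i, t) : (Fin 2 × Fin p) ⊕ Fin r) :=
    fun _ _ h => congrArg Prod.snd (Sum.inl_injective h)
  exact ⟨_, _, conjTranspose_mul_self_submatrix_id hW (hinj 0),
    conjTranspose_mul_self_submatrix_id hW (hinj 1), hb, mul_nilCanon_mul_conjTranspose W⟩

theorem exists_unitarilySimilar_nilCanon {A : Matrix m m ℍ[ℝ]} (hA : A * A = 0) :
    ∃ (p r : ℕ) (b : Fin p → ℝ) (e : ((Fin 2 × Fin p) ⊕ Fin r) ≃ m),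
      (∀ t, 0 < b t) ∧ UnitarilySimilar A ((nilCanon p r b).submatrix e.symm e.symm) := by
  obtain ⟨p, U, b, V, hsvd⟩ := exists_isCompactSVD A
  have hUV : (fromCols U V)ᴴ * fromCols U V = 1 :=
    conjTranspose_mul_self_fromCols hsvd.left_isometry hsvd.right_isometry
      (hsvd.conjTranspose_right_mul_left_eq_zero hA)
  let τ : Fin 2 × Fin p ≃ Fin p ⊕ Fin p :=
    (finTwoEquiv.prodCongr (Equiv.refl _)).trans (Equiv.boolProdEquivSum _)
  obtain ⟨r, G, hW, hW'⟩ :=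
    exists_fromCols_unitary (conjTranspose_mul_self_submatrix_id hUV τ.injective)
  let e := Fintype.equivOfCardEq (card_eq_of_matrix_mul_eq_one hW hW')
  refine ⟨p, r, b, e, hsvd.pos, (unitarilySimilar_submatrix_iff e).2 ⟨_, hW, ?_⟩⟩
  rw [mul_nilCanon_mul_conjTranspose]
  exact hsvd.eq_mul

theorem nilCanon_unique {A : Matrix m m ℍ[ℝ]} {p' r' : ℕ} {b' : Fin p' → ℝ}
    {e : ((Fin 2 × Fin p) ⊕ Fin r) ≃ m} {e' : ((Fin 2 × Fin p') ⊕ Fin r') ≃ m}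
    (hb : ∀ t, 0 < b t) (hA : UnitarilySimilar A ((nilCanon p r b).submatrix e.symm e.symm))
    (hb' : ∀ t, 0 < b' t)
    (hA' : UnitarilySimilar A ((nilCanon p' r' b').submatrix e'.symm e'.symm)) :
    p = p' ∧ r = r' ∧ ∃ σ : Fin p ≃ Fin p', ∀ t, b t = b' (σ t) := by
  obtain ⟨U, V, hsvd⟩ := exists_isCompactSVD_of_unitarilySimilar_nilCanon hb hA
  obtain ⟨U', V', hsvd'⟩ := exists_isCompactSVD_of_unitarilySimilar_nilCanon hb' hA'
  obtain ⟨σ, hσ⟩ := hsvd.exists_equiv_eq_comp hsvd'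
  have hp : p = p' := Fin.equiv_iff_eq.1 ⟨σ⟩
  have hcard : 2 * p + r = 2 * p' + r' := by
    simpa using Fintype.card_congr (e.trans e'.symm)
  exact ⟨hp, by omega, σ, hσ⟩

end CanonicalForm

/-- **Theorem 3.1(b).** Every self-annihilating quaternion matrix (`A² = 0`) is unitarily
similar to a direct sum of blocks `[[0,b],[0,0]]` (`b > 0`) and `[0]`, and this direct sum
is uniquely determined up to permutation of the summands. -/
theorem self_annihilating_canonical_form {n : ℕ} (A : Matrix (Fin n) (Fin n) ℍ[ℝ])
    (hA : A * A = 0) :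
    ∃ (p r : ℕ) (b : Fin p → ℝ) (e : ((Fin 2 × Fin p) ⊕ Fin r) ≃ Fin n),
      (∀ t, 0 < b t) ∧
      UnitarilySimilar A ((nilCanon p r b).submatrix e.symm e.symm) ∧
      ∀ (p' r' : ℕ) (b' : Fin p' → ℝ) (e' : ((Fin 2 × Fin p') ⊕ Fin r') ≃ Fin n),
        (∀ t, 0 < b' t) →
        UnitarilySimilar A ((nilCanon p' r' b').submatrix e'.symm e'.symm) →
        p = p' ∧ r = r' ∧ ∃ σ : Fin p ≃ Fin p', ∀ t, b t = b' (σ t) := by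
  obtain ⟨p, r, b, e, hb, hAe⟩ := exists_unitarilySimilar_nilCanon hA
  exact ⟨p, r, b, e, hb, hAe, fun _ _ _ _ hb' hAe' => nilCanon_unique hb hAe hb' hAe'⟩
end
end

section
/- Let λ be a real number and let A be an n×n quaternion matrix with (A − λI)² = 0. Then A is unitarily similar to a direct sum of matrices, each of which is one of: the 2×2 matrix [[λ, b],[0, λ]] with b a positive real number, or the 1×1 matrix [λ]. -/
open Matrix
open scoped Quaternion

noncomputable section

/-- The direct sum of `p` blocks `[[λ, b t],[0, λ]]` and `r` blocks `[λ]`. -/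
def lamCanon (lam : ℝ) (p r : ℕ) (b : Fin p → ℝ) :
    Matrix ((Fin 2 × Fin p) ⊕ Fin r) ((Fin 2 × Fin p) ⊕ Fin r) ℍ[ℝ] :=
  Matrix.fromBlocks
    (Matrix.blockDiagonal fun t => !![(lam : ℍ[ℝ]), (b t : ℍ[ℝ]); 0, (lam : ℍ[ℝ])]) 0 0
    (Matrix.diagonal fun _ => (lam : ℍ[ℝ]))

/-!
Put `B = A - λ`, so that `B² = 0`. Over `ℍ` there is a compact singular value decomposition
`B = Xᴴ S Y`, where `X` and `Y` have orthonormal rows and `S` is a positive real diagonal matrix.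
Now `S (Y Xᴴ) S = X B² Yᴴ = 0` forces `Y Xᴴ = 0`, so the rows of `X` and `Y` together are
orthonormal. Completing them by rows `Z` gives a unitary matrix, and `X B = S Y`, `Y B = 0`,
`Z B = 0`: each row of `X` together with the corresponding row of `Y` spans a block
`[[0, s], [0, 0]]`, and each row of `Z` spans a block `[0]`.

The singular value decomposition comes from diagonalizing the Hermitian matrix `B Bᴴ`. A Hermitian
matrix acts on row vectors as a symmetric operator for the real inner product `Re (v wᴴ)`, so the
real spectral theorem provides eigenvectors with real eigenvalues. The vectors orthogonal over `ℍ`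
to the eigenvectors already found form an invariant real subspace, so one can repeat.
-/

section QuaternionMatrix

variable {ι κ m : Type*} [Fintype ι]

lemma coe_quaternion_ne_zero_iff {x : ℝ} : (x : ℍ[ℝ]) ≠ 0 ↔ x ≠ 0 :=
  Quaternion.coe_injective.ne_iff' Quaternion.coe_zero

lemma inner_toLp_eq_re_dotProduct_star (v w : ι → ℍ[ℝ]) :
    inner ℝ (WithLp.toLp 2 v) (WithLp.toLp 2 w) = (v ⬝ᵥ star w).re := by
  simp only [PiLp.inner_apply, Quaternion.inner_def, dotProduct, Pi.star_apply]
  exact (map_sum (QuaternionAlgebra.reₗ (-1 : ℝ) 0 (-1)) (fun i => v i * star (w i)) _).symm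

lemma dotProduct_star_self_eq_coe_norm_sq (v : ι → ℍ[ℝ]) :
    v ⬝ᵥ star v = ((‖WithLp.toLp 2 v‖ ^ 2 : ℝ) : ℍ[ℝ]) := by
  simp only [PiLp.norm_sq_eq_of_L2, dotProduct, Pi.star_apply, Quaternion.self_mul_star,
    Quaternion.normSq_eq_norm_mul_self, ← sq]
  exact (map_sum (algebraMap ℝ ℍ[ℝ]) (fun i => ‖v i‖ ^ 2) _).symm

/-- Right multiplication `v ↦ v ᵥ* M` of row vectors by `M`, as a real linear map between Euclidean
spaces. Forgetting the quaternionic structure makes the real spectral theorem available. -/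
def vecMulEuclidean (M : Matrix ι κ ℍ[ℝ]) :
    EuclideanSpace ℍ[ℝ] ι →ₗ[ℝ] EuclideanSpace ℍ[ℝ] κ :=
  (WithLp.linearEquiv 2 ℝ (κ → ℍ[ℝ])).symm.toLinearMap ∘ₗ
    M.vecMulLinear.restrictScalars ℝ ∘ₗ (WithLp.linearEquiv 2 ℝ (ι → ℍ[ℝ])).toLinearMap

lemma vecMulEuclidean_apply (M : Matrix ι κ ℍ[ℝ]) (v : EuclideanSpace ℍ[ℝ] ι) :
    vecMulEuclidean M v = WithLp.toLp 2 (v.ofLp ᵥ* M) := rfl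

lemma isSymmetric_vecMulEuclidean {H : Matrix ι ι ℍ[ℝ]} (hH : H.IsHermitian) :
    (vecMulEuclidean H).IsSymmetric := fun v w => by
  rw [vecMulEuclidean_apply, vecMulEuclidean_apply, ← WithLp.toLp_ofLp 2 v,
    ← WithLp.toLp_ofLp 2 w, inner_toLp_eq_re_dotProduct_star, inner_toLp_eq_re_dotProduct_star,
    star_vecMul, hH.eq, dotProduct_mulVec]

lemma exists_orthogonal_eigenvector [Fintype κ] {H : Matrix ι ι ℍ[ℝ]} (hH : H.IsHermitian)
    {X : Matrix κ ι ℍ[ℝ]} {K : Matrix κ κ ℍ[ℝ]} (hX : X * H = K * X)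
    (hcard : Fintype.card κ < Fintype.card ι) :
    ∃ (w : ι → ℍ[ℝ]) (e : ℝ), w ⬝ᵥ star w = 1 ∧ w ᵥ* Xᴴ = 0 ∧ w ᵥ* H = e • w := by
  let V := LinearMap.ker (vecMulEuclidean Xᴴ)
  have hV {v} : v ∈ V ↔ v.ofLp ᵥ* Xᴴ = 0 := by
    rw [LinearMap.mem_ker, vecMulEuclidean_apply, WithLp.toLp_eq_zero]
  have hinv : ∀ v ∈ V, vecMulEuclidean H v ∈ V := fun v hv => by
    have hcomm : H * Xᴴ = Xᴴ * Kᴴ := by simpa [hH.eq] using congrArg conjTranspose hX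
    rw [hV] at hv ⊢
    rw [vecMulEuclidean_apply, vecMul_vecMul, hcomm, ← vecMul_vecMul, hv, zero_vecMul]
  have hker : LinearMap.ker Xᴴ.vecMulLinear ≠ ⊥ :=
    LinearMap.ker_ne_bot_of_finrank_lt (by simpa using hcard)
  obtain ⟨v, hv, hv0⟩ := Submodule.exists_mem_ne_zero_of_ne_bot hker
  have : Nontrivial V := ⟨⟨WithLp.toLp 2 v, hV.2 hv⟩, 0, fun h => hv0 <| by
    simpa using congrArg Subtype.val h⟩
  have hsymm := (isSymmetric_vecMulEuclidean hH).restrict_invariant hinv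
  let i : Fin (Module.finrank ℝ V) := ⟨0, Module.finrank_pos⟩
  let u := hsymm.eigenvectorBasis rfl i
  have hu : ‖(u : EuclideanSpace ℍ[ℝ] ι)‖ = 1 := (hsymm.eigenvectorBasis rfl).norm_eq_one i
  refine ⟨u.1.ofLp, hsymm.eigenvalues rfl i, ?_, hV.1 u.2, ?_⟩
  · rw [dotProduct_star_self_eq_coe_norm_sq, WithLp.toLp_ofLp, hu, one_pow, Quaternion.coe_one]
  · exact congrArg (fun v : V => v.1.ofLp) (hsymm.apply_eigenvectorBasis rfl i)

lemma exists_orthogonal_eigenrow [Fintype κ] {H : Matrix ι ι ℍ[ℝ]} (hH : H.IsHermitian)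
    {X : Matrix κ ι ℍ[ℝ]} {K : Matrix κ κ ℍ[ℝ]} (hX : X * H = K * X)
    (hcard : Fintype.card κ < Fintype.card ι) :
    ∃ (W : Matrix (Fin 1) ι ℍ[ℝ]) (e : ℝ), W * Wᴴ = 1 ∧ W * Xᴴ = 0 ∧ W * H = e • W := by
  obtain ⟨w, e, hww, hwX, hwH⟩ := exists_orthogonal_eigenvector hH hX hcard
  refine ⟨replicateRow (Fin 1) w, e, ?_, ?_, ?_⟩
  · rw [conjTranspose_replicateRow, replicateRow_mul_replicateCol, hww]
    ext1 i j
    rw [of_apply, Subsingleton.elim i j, one_apply_eq]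
  · rw [← replicateRow_vecMul, hwX, replicateRow_zero]
  · rw [← replicateRow_vecMul, hwH, replicateRow_smul]

lemma fromRows_mul_conjTranspose_self_eq_one {R : Type*} [Semiring R] [StarRing R] [DecidableEq κ]
    [DecidableEq m] {X : Matrix κ ι R} {Y : Matrix m ι R} (hX : X * Xᴴ = 1) (hY : Y * Yᴴ = 1)
    (hYX : Y * Xᴴ = 0) : fromRows X Y * (fromRows X Y)ᴴ = 1 := by
  have hXY : X * Yᴴ = 0 := by simpa using congrArg conjTranspose hYX
  rw [conjTranspose_fromRows_eq_fromCols_conjTranspose, fromRows_mul_fromCols, hX, hXY, hYX, hY,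
    fromBlocks_one]

lemma mul_conjTranspose_fromRows_eq_zero_iff {R n : Type*} [Semiring R] [StarRing R]
    {X : Matrix κ ι R} {Y : Matrix m ι R} {Z : Matrix n ι R} :
    Z * (fromRows X Y)ᴴ = 0 ↔ Z * Xᴴ = 0 ∧ Z * Yᴴ = 0 := by
  rw [conjTranspose_fromRows_eq_fromCols_conjTranspose, mul_fromCols, ← fromCols_zero,
    fromCols_ext_iff]

theorem exists_orthonormal_eigenrows [Fintype κ] {H : Matrix ι ι ℍ[ℝ]} (hH : H.IsHermitian)
    {X : Matrix κ ι ℍ[ℝ]} {K : Matrix κ κ ℍ[ℝ]} (hX : X * H = K * X) {r : ℕ}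
    (hr : Fintype.card κ + r ≤ Fintype.card ι) :
    ∃ (Z : Matrix (Fin r) ι ℍ[ℝ]) (d : Fin r → ℝ), Z * Zᴴ = 1 ∧ Z * Xᴴ = 0 ∧
      Z * H = diagonal (fun i => (d i : ℍ[ℝ])) * Z := by
  induction r with
  | zero => exact ⟨0, 0, Subsingleton.elim _ _, Subsingleton.elim _ _, Subsingleton.elim _ _⟩
  | succ r ih =>
    obtain ⟨Z, d, hZZ, hZX, hZH⟩ := ih (by lia)
    have hXZ : fromRows X Z * H =
        fromBlocks K 0 0 (diagonal fun i => (d i : ℍ[ℝ])) * fromRows X Z := by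
      simp [fromRows_mul, fromBlocks_mul_fromRows, hX, hZH]
    obtain ⟨W, e, hWW, hWXZ, hWH⟩ := exists_orthogonal_eigenrow hH hXZ (by
      simp only [Fintype.card_sum, Fintype.card_fin]
      lia)
    obtain ⟨hWX, hWZ⟩ := mul_conjTranspose_fromRows_eq_zero_iff.1 hWXZ
    have hZWH (i j) : (fromRows Z W * H) i j =
        ((Sum.elim d (fun _ => e) i : ℝ) : ℍ[ℝ]) * fromRows Z W i j := by
      rw [fromRows_mul, hZH, hWH]
      cases i <;> simp [Quaternion.coe_mul_eq_smul]
    let f : Fin (r + 1) ≃ Fin r ⊕ Fin 1 := finSumFinEquiv.symm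
    refine ⟨(fromRows Z W).submatrix f id, Sum.elim d (fun _ => e) ∘ f, ?_, ?_, ?_⟩
    · rw [conjTranspose_submatrix, ← submatrix_mul _ _ _ _ _ Function.bijective_id,
        fromRows_mul_conjTranspose_self_eq_one hZZ hWW hWZ, submatrix_one_equiv]
    · rw [← submatrix_id_id Xᴴ, ← submatrix_mul _ _ _ _ _ Function.bijective_id, fromRows_mul,
        hZX, hWX, fromRows_zero, submatrix_zero]
      rfl
    · ext1 i j
      rw [diagonal_mul]
      exact hZWH (f i) j

lemma card_le_card_of_mul_eq_one [DecidableEq κ] [Fintype κ] {R : Type*} [Semiring R]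
    [StrongRankCondition R] {A : Matrix κ ι R} {B : Matrix ι κ R} (h : A * B = 1) :
    Fintype.card κ ≤ Fintype.card ι :=
  card_le_of_injective R A.vecMulLinear <|
    Function.LeftInverse.injective (g := (· ᵥ* B)) fun v => by simp [vecMul_vecMul, h]

lemma exists_orthonormal_completion [Finite κ] [DecidableEq κ] {X : Matrix κ ι ℍ[ℝ]}
    (hX : X * Xᴴ = 1) :
    ∃ (r : ℕ) (Z : Matrix (Fin r) ι ℍ[ℝ]),
      Nonempty (κ ⊕ Fin r ≃ ι) ∧ Z * Zᴴ = 1 ∧ Z * Xᴴ = 0 := by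
  have := Fintype.ofFinite κ
  obtain ⟨r, hr⟩ := Nat.exists_eq_add_of_le (card_le_card_of_mul_eq_one hX)
  -- For `H = 0` every row is an eigenrow.
  obtain ⟨Z, -, hZZ, hZX, -⟩ := exists_orthonormal_eigenrows (H := 0) (X := X) (K := 0) (r := r)
    isHermitian_zero (by simp) hr.ge
  exact ⟨r, Z, Fintype.card_eq.1 (by simp [hr]), hZZ, hZX⟩

theorem exists_unitary_diagonalization [DecidableEq ι] {H : Matrix ι ι ℍ[ℝ]} (hH : H.IsHermitian) :
    ∃ (U : Matrix (Fin (Fintype.card ι)) ι ℍ[ℝ]) (d : Fin (Fintype.card ι) → ℝ),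
      U * Uᴴ = 1 ∧ Uᴴ * U = 1 ∧ U * H = diagonal (fun i => (d i : ℍ[ℝ])) * U := by
  obtain ⟨U, d, hUU, -, hUH⟩ := exists_orthonormal_eigenrows (κ := Empty) (X := 0) (K := 0) hH
    (by simp) (by simp : _ + Fintype.card ι ≤ _)
  exact ⟨U, d, hUU, (mul_eq_one_comm_of_card_eq _ _ _ (Fintype.card_fin _)).1 hUU, hUH⟩

lemma exists_normalized_rows [Finite m] {M : Matrix m ι ℍ[ℝ]} (hM : (M * Mᴴ).IsDiag) :
    ∃ (p : ℕ) (f : Fin p → m) (s : Fin p → ℝ) (Y : Matrix (Fin p) ι ℍ[ℝ]),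
      f.Injective ∧ (∀ i ∉ Set.range f, M i = 0) ∧ (∀ t, 0 < s t) ∧ Y * Yᴴ = 1 ∧
      M.submatrix f id = diagonal (fun t => (s t : ℍ[ℝ])) * Y := by
  classical
  have := Fintype.ofFinite m
  let g := (Fintype.equivFin {i // M i ≠ 0}).symm
  let f t : m := g t
  have hf : f.Injective := Subtype.val_injective.comp g.injective
  let s t := ‖WithLp.toLp 2 (M (f t))‖
  have hs t : 0 < s t := norm_pos_iff.2 <| (WithLp.toLp_eq_zero 2).not.2 (g t).2
  have hs' t : (s t : ℍ[ℝ]) ≠ 0 := coe_quaternion_ne_zero_iff.2 (hs t).ne'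
  let N := M.submatrix f id
  have hNN : N * Nᴴ = diagonal fun t => ((s t ^ 2 : ℝ) : ℍ[ℝ]) := by
    ext1 t u
    obtain rfl | htu := eq_or_ne t u
    · rw [diagonal_apply_eq]
      exact dotProduct_star_self_eq_coe_norm_sq _
    · rw [diagonal_apply_ne _ htu]
      exact hM (hf.ne htu)
  refine ⟨_, f, s, diagonal (fun t => (s t : ℍ[ℝ])⁻¹) * N, hf, fun i hi => ?_, hs, ?_, ?_⟩
  · by_contra h
    exact hi ⟨g.symm ⟨i, h⟩, by simp [f]⟩
  · rw [conjTranspose_mul, Matrix.mul_assoc, ← Matrix.mul_assoc N, hNN, diagonal_conjTranspose,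
      diagonal_mul_diagonal, diagonal_mul_diagonal]
    simp [sq, hs']
  · rw [← Matrix.mul_assoc, diagonal_mul_diagonal]
    simp [hs', N]

theorem exists_compact_svd [Fintype κ] (B : Matrix ι κ ℍ[ℝ]) :
    ∃ (p : ℕ) (X : Matrix (Fin p) ι ℍ[ℝ]) (Y : Matrix (Fin p) κ ℍ[ℝ]) (s : Fin p → ℝ),
      (∀ t, 0 < s t) ∧ X * Xᴴ = 1 ∧ Y * Yᴴ = 1 ∧
      B = Xᴴ * diagonal (fun t => (s t : ℍ[ℝ])) * Y := by
  classical
  obtain ⟨U, d, hUU, hUU', hUH⟩ :=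
    exists_unitary_diagonalization (isHermitian_mul_conjTranspose_self B)
  have hdiag : ((U * B) * (U * B)ᴴ).IsDiag := by
    rw [conjTranspose_mul, Matrix.mul_assoc, ← Matrix.mul_assoc B, ← Matrix.mul_assoc, hUH,
      Matrix.mul_assoc, hUU, Matrix.mul_one]
    exact isDiag_diagonal _
  obtain ⟨p, f, s, Y, hf, hzero, hs, hYY, hY⟩ := exists_normalized_rows hdiag
  refine ⟨p, U.submatrix f id, Y, s, hs, ?_, hYY, ?_⟩
  · rw [conjTranspose_submatrix, ← submatrix_mul _ _ _ _ _ Function.bijective_id, hUU,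
      submatrix_one _ hf]
  · calc B = Uᴴ * (U * B) := by rw [← Matrix.mul_assoc, hUU', Matrix.one_mul]
      _ = (U.submatrix f id)ᴴ * (U * B).submatrix f id := by
        ext1 i j
        exact (Fintype.sum_of_injective f hf _ _
          (fun k hk => mul_eq_zero_of_right _ (congrFun (hzero k hk) j)) fun _ => rfl).symm
      _ = _ := by rw [hY, Matrix.mul_assoc]

lemma eq_zero_of_diagonal_mul_mul_diagonal_eq_zero {R : Type*} [Semiring R] [NoZeroDivisors R]
    [DecidableEq ι] [Fintype κ] [DecidableEq κ] {d : ι → R} {e : κ → R} {M : Matrix ι κ R}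
    (hd : ∀ i, d i ≠ 0) (he : ∀ j, e j ≠ 0) (h : diagonal d * M * diagonal e = 0) : M = 0 := by
  ext1 i j
  have hij := congrFun₂ h i j
  rw [mul_diagonal, diagonal_mul] at hij
  simpa [hd, he] using hij

/-- The direct sum of the blocks `[[0, s t], [0, 0]]` and `r` zero blocks, with the first
coordinates of all `2 × 2` blocks listed first, then the second ones, then the zero blocks. -/
def nilpotentForm {p : ℕ} (r : ℕ) (s : Fin p → ℝ) :
    Matrix ((Fin p ⊕ Fin p) ⊕ Fin r) ((Fin p ⊕ Fin p) ⊕ Fin r) ℍ[ℝ] :=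
  fromBlocks (fromBlocks 0 (diagonal fun t => (s t : ℍ[ℝ])) 0 0) 0 0 0

theorem exists_unitary_nilpotent_form {B : Matrix ι ι ℍ[ℝ]} (hB : B * B = 0) :
    ∃ (p r : ℕ) (s : Fin p → ℝ) (V : Matrix ((Fin p ⊕ Fin p) ⊕ Fin r) ι ℍ[ℝ]),
      (∀ t, 0 < s t) ∧ Nonempty ((Fin p ⊕ Fin p) ⊕ Fin r ≃ ι) ∧ V * Vᴴ = 1 ∧
      V * B = nilpotentForm r s * V := by
  obtain ⟨p, X, Y, s, hs, hXX, hYY, hXSY⟩ := exists_compact_svd B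
  set S := diagonal fun t => (s t : ℍ[ℝ])
  have hs' t : (s t : ℍ[ℝ]) ≠ 0 := coe_quaternion_ne_zero_iff.2 (hs t).ne'
  have hYX : Y * Xᴴ = 0 := by
    refine eq_zero_of_diagonal_mul_mul_diagonal_eq_zero hs' hs' ?_
    calc S * (Y * Xᴴ) * S = X * Xᴴ * S * Y * (Xᴴ * S * (Y * Yᴴ)) := by
          simp only [hXX, hYY, Matrix.one_mul, Matrix.mul_one, Matrix.mul_assoc]
      _ = X * (B * B) * Yᴴ := by simp only [hXSY, Matrix.mul_assoc]
      _ = 0 := by rw [hB, Matrix.mul_zero, Matrix.zero_mul]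
  have hXY := fromRows_mul_conjTranspose_self_eq_one hXX hYY hYX
  obtain ⟨r, Z, hcard, hZZ, hZXY⟩ := exists_orthonormal_completion hXY
  have hZX : Z * Xᴴ = 0 := (mul_conjTranspose_fromRows_eq_zero_iff.1 hZXY).1
  have hXB : X * B = S * Y := by simp [hXSY, ← Matrix.mul_assoc, hXX]
  have hYB : Y * B = 0 := by simp [hXSY, ← Matrix.mul_assoc, hYX]
  have hZB : Z * B = 0 := by simp [hXSY, ← Matrix.mul_assoc, hZX]
  refine ⟨p, r, s, fromRows (fromRows X Y) Z, hs, hcard,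
    fromRows_mul_conjTranspose_self_eq_one hXY hZZ hZXY, ?_⟩
  simp [nilpotentForm, fromRows_mul, fromBlocks_mul_fromRows, hXB, hYB, hZB, S]

lemma unitarilySimilar_submatrix_of_mul_eq [Fintype κ] [DecidableEq ι] [DecidableEq κ]
    {A : Matrix ι ι ℍ[ℝ]} {C : Matrix κ κ ℍ[ℝ]} {V : Matrix κ ι ℍ[ℝ]} (e : κ ≃ ι)
    (hV : V * Vᴴ = 1) (hVA : V * A = C * V) :
    UnitarilySimilar A (C.submatrix e.symm e.symm) := by
  have hV' : Vᴴ * V = 1 := (mul_eq_one_comm_of_equiv e).1 hV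
  refine ⟨V.submatrix e.symm id, ?_, ?_⟩
  · rw [IsUnitaryM, conjTranspose_submatrix, submatrix_mul_equiv, hV', submatrix_id_id]
  · rw [conjTranspose_submatrix, submatrix_mul_equiv, submatrix_mul_equiv, submatrix_id_id,
      Matrix.mul_assoc, ← hVA, ← Matrix.mul_assoc, hV', Matrix.one_mul]

lemma mul_coe_smul_one [Fintype κ] [DecidableEq ι] [DecidableEq κ] (M : Matrix κ ι ℍ[ℝ]) (c : ℝ) :
    M * ((c : ℍ[ℝ]) • (1 : Matrix ι ι ℍ[ℝ])) = (c : ℍ[ℝ]) • (1 : Matrix κ κ ℍ[ℝ]) * M := by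
  ext1 i j
  rw [smul_one_eq_diagonal, smul_one_eq_diagonal, mul_diagonal, diagonal_mul,
    Quaternion.coe_commutes]

/-- Splits the two coordinates of each `2 × 2` block of `lamCanon` into two groups. -/
def finTwoProdSumEquiv (p r : ℕ) : (Fin p ⊕ Fin p) ⊕ Fin r ≃ (Fin 2 × Fin p) ⊕ Fin r :=
  .sumCongr ((Equiv.boolProdEquivSum _).symm.trans (.prodCongrLeft fun _ => finTwoEquiv.symm))
    (.refl _)

lemma lamCanon_submatrix (lam : ℝ) (p r : ℕ) (s : Fin p → ℝ) :
    (lamCanon lam p r s).submatrix (finTwoProdSumEquiv p r) (finTwoProdSumEquiv p r) =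
      nilpotentForm r s + (lam : ℍ[ℝ]) • 1 := by
  ext1 i j
  rcases i with (i | i) | i <;> rcases j with (j | j) | j <;>
    simp [lamCanon, nilpotentForm, finTwoProdSumEquiv, Equiv.boolProdEquivSum, finTwoEquiv,
      one_apply, diagonal_apply, blockDiagonal_apply]

theorem quadratic_real_eigenvalue_canonical_form_general [DecidableEq ι] (lam : ℝ)
    (A : Matrix ι ι ℍ[ℝ]) (hA : (A - (lam : ℍ[ℝ]) • 1) * (A - (lam : ℍ[ℝ]) • 1) = 0) :
    ∃ (p r : ℕ) (b : Fin p → ℝ) (e : (Fin 2 × Fin p) ⊕ Fin r ≃ ι),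
      (∀ t, 0 < b t) ∧
      UnitarilySimilar A ((lamCanon lam p r b).submatrix e.symm e.symm) := by
  obtain ⟨p, r, b, V, hb, ⟨e⟩, hVV, hVB⟩ := exists_unitary_nilpotent_form hA
  have hVA : V * A = (nilpotentForm r b + (lam : ℍ[ℝ]) • (1 : Matrix _ _ ℍ[ℝ])) * V := by
    rw [Matrix.add_mul, ← hVB, ← mul_coe_smul_one, Matrix.mul_sub, sub_add_cancel]
  have hAC := unitarilySimilar_submatrix_of_mul_eq e hVV hVA
  rw [← lamCanon_submatrix, submatrix_submatrix] at hAC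
  exact ⟨p, r, b, (finTwoProdSumEquiv p r).symm.trans e, hb, hAC⟩

end QuaternionMatrix

/-- If `λ` is real and `(A - λI)² = 0`, then `A` is unitarily similar to a direct sum of
blocks `[[λ,b],[0,λ]]` (`b > 0`) and `[λ]`. -/
theorem quadratic_real_eigenvalue_canonical_form {n : ℕ} (lam : ℝ)
    (A : Matrix (Fin n) (Fin n) ℍ[ℝ])
    (hA : (A - (lam : ℍ[ℝ]) • 1) * (A - (lam : ℍ[ℝ]) • 1) = 0) :
    ∃ (p r : ℕ) (b : Fin p → ℝ) (e : ((Fin 2 × Fin p) ⊕ Fin r) ≃ Fin n),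
      (∀ t, 0 < b t) ∧
      UnitarilySimilar A ((lamCanon lam p r b).submatrix e.symm e.symm) :=
  quadratic_real_eigenvalue_canonical_form_general lam A hA
end
end

section
/- Every n×n quaternion matrix A is unitarily similar to an upper triangular quaternion matrix whose diagonal entries are complex numbers with nonnegative imaginary parts, arranged in ⪰-decreasing order down the diagonal (Schur's theorem for quaternion matrices). -/
open Matrix
open scoped Quaternion

noncomputable section

/-- The embedding of `ℂ = ℝ + ℝi` into the quaternions. -/
def cq (z : ℂ) : ℍ[ℝ] := ⟨z.re, z.im, 0, 0⟩

/-- The ordering `⪰` on complex numbers: `a+bi ⪰ c+di` iff (`a ≥ c` and `b = d`) or `b > d`. -/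
def csucceq (z w : ℂ) : Prop := (w.re ≤ z.re ∧ z.im = w.im) ∨ w.im < z.im

/-!
A complex root `z` of the real minimal polynomial of `A` is a right eigenvalue: `A v = v z` for some
`v ≠ 0`. Completing the normalized `v` to a unitary matrix by a Householder reflection splits off
`z`, and the triangular form follows by induction on the size. For the ordering, split off a
`⪰`-largest root in the upper half-plane at each step: every complex diagonal entry of the resulting
triangular matrix is again a root of the minimal polynomial, which unitary similarity preserves, so
`z` dominates all the later diagonal entries.
-/

open Polynomial

section Order

theorem exists_mem_forall_csucceq {s : Set ℂ} (hs : s.Finite) (hne : s.Nonempty) :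
    ∃ z ∈ s, ∀ w ∈ s, csucceq z w := by
  obtain ⟨z, hz, hmax⟩ := hs.exists_maximalFor (fun z : ℂ => toLex (z.im, z.re)) s hne
  refine ⟨z, hz, fun w hw => ?_⟩
  have hle : toLex (w.im, w.re) ≤ toLex (z.im, z.re) := (le_total _ _).elim id (hmax hw)
  exact (Prod.Lex.toLex_le_toLex.1 hle).symm.imp (fun h => ⟨h.2, h.1.symm⟩) id

theorem exists_aeval_eq_zero_im_nonneg {p : ℝ[X]} (hp : p.degree ≠ 0) :
    ∃ z : ℂ, aeval z p = 0 ∧ 0 ≤ z.im := by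
  obtain ⟨z, hz⟩ := IsAlgClosed.exists_aeval_eq_zero ℂ p hp
  rcases le_total 0 z.im with h | h
  · exact ⟨z, hz, h⟩
  · exact ⟨starRingEnd ℂ z, by rw [aeval_conj, hz, map_zero], by simpa using h⟩

theorem exists_csucceq_root {p : ℝ[X]} (hp : 0 < p.degree) :
    ∃ z : ℂ, aeval z p = 0 ∧ 0 ≤ z.im ∧
      ∀ w : ℂ, aeval w p = 0 → 0 ≤ w.im → csucceq z w := by
  have hfin : {z : ℂ | aeval z p = 0 ∧ 0 ≤ z.im}.Finite :=
    (p.rootSet_finite ℂ).subset fun z hz => (mem_rootSet_of_ne (ne_zero_of_degree_gt hp)).2 hz.1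
  obtain ⟨z, ⟨hz, hz0⟩, hmax⟩ :=
    exists_mem_forall_csucceq hfin (exists_aeval_eq_zero_im_nonneg hp.ne')
  exact ⟨z, hz, hz0, fun w hw hw0 => hmax w ⟨hw, hw0⟩⟩

end Order

section Householder

variable {ι D : Type*} [Fintype ι] [DivisionRing D] [StarRing D]

/-- The orthogonal projection `w ⟨w, w⟩⁻¹ wᴴ` onto the right line spanned by `w`. It is `0` if
`⟨w, w⟩ = 0`, since then `⟨w, w⟩⁻¹ = 0`. -/
def lineProj (w : ι → D) : Matrix ι ι D :=
  vecMulVec (MulOpposite.op (star w ⬝ᵥ w)⁻¹ • w) (star w)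

theorem isStarProjection_lineProj (w : ι → D) : IsStarProjection (lineProj w) := by
  have hstar : star (star w ⬝ᵥ w) = star w ⬝ᵥ w := by rw [← star_dotProduct_star, star_star]
  constructor
  · rw [IsIdempotentElem, lineProj, vecMulVec_mul_vecMulVec, dotProduct_smul]
    ext i j
    rcases eq_or_ne (star w ⬝ᵥ w) 0 with h | h <;> simp [vecMulVec_apply, h]
  · rw [IsSelfAdjoint, star_eq_conjTranspose, lineProj, conjTranspose_vecMulVec]
    ext i j
    simp [vecMulVec_apply, mul_assoc, hstar]

variable [DecidableEq ι]

/-- The Householder reflection along `w`, which fixes the orthogonal complement of `w` and maps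
`w` to `-w`. It is the identity if `⟨w, w⟩ = 0`. -/
def householder (w : ι → D) : Matrix ι ι D := 1 - 2 * lineProj w

theorem householder_mem_unitary (w : ι → D) : householder w ∈ unitary (Matrix ι ι D) := by
  have h := (isStarProjection_lineProj w).two_mul_sub_one_mem_unitary
  rw [householder, ← neg_sub, Unitary.mem_iff, star_neg, neg_mul_neg, neg_mul_neg]
  exact Unitary.mem_iff.1 h

theorem householder_sub_mulVec {x y : ι → D} (hnorm : star x ⬝ᵥ x = star y ⬝ᵥ y)
    (hsymm : star x ⬝ᵥ y = star y ⬝ᵥ x) (hxy : star (x - y) ⬝ᵥ (x - y) ≠ 0) :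
    householder (x - y) *ᵥ x = y := by
  set w := x - y with hw
  have htwo : star w ⬝ᵥ x + star w ⬝ᵥ x = star w ⬝ᵥ w := by
    simp only [hw, star_sub, sub_dotProduct, dotProduct_sub, hnorm, hsymm]
    abel
  have hproj : lineProj w *ᵥ x + lineProj w *ᵥ x = w := by
    rw [lineProj, vecMulVec_mulVec, ← add_smul, ← MulOpposite.op_add, htwo, smul_smul,
      ← MulOpposite.op_mul, inv_mul_cancel₀ hxy, MulOpposite.op_one, one_smul]
  rw [householder, sub_mulVec, one_mulVec, two_mul, add_mulVec, hproj, hw, sub_sub_cancel]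

end Householder

section UnitColumn

variable {ι : Type*} [Fintype ι]

theorem star_dotProduct_self_eq_coe (v : ι → ℍ[ℝ]) :
    star v ⬝ᵥ v = ((∑ i, Quaternion.normSq (v i) : ℝ) : ℍ[ℝ]) := by
  simp only [dotProduct, Pi.star_apply, Quaternion.star_mul_self]
  exact (map_sum (algebraMap ℝ ℍ[ℝ]) _ _).symm

theorem sum_normSq_pos {v : ι → ℍ[ℝ]} (hv : v ≠ 0) : 0 < ∑ i, Quaternion.normSq (v i) := by
  obtain ⟨i, hi⟩ := Function.ne_iff.1 hv
  exact Finset.sum_pos' (fun i _ => Quaternion.normSq_nonneg)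
    ⟨i, Finset.mem_univ i, Quaternion.normSq_nonneg.lt_of_ne' (Quaternion.normSq_ne_zero.2 hi)⟩

theorem star_dotProduct_self_ne_zero {v : ι → ℍ[ℝ]} (hv : v ≠ 0) : star v ⬝ᵥ v ≠ 0 := by
  rw [star_dotProduct_self_eq_coe]
  exact (map_ne_zero (algebraMap ℝ ℍ[ℝ])).2 (sum_normSq_pos hv).ne'

theorem exists_smul_star_dotProduct_eq_one {v : ι → ℍ[ℝ]} (hv : v ≠ 0) :
    ∃ r : ℝ, star (r • v) ⬝ᵥ (r • v) = 1 := by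
  have hpos := sum_normSq_pos hv
  refine ⟨(√(∑ i, Quaternion.normSq (v i)))⁻¹, ?_⟩
  rw [star_dotProduct_self_eq_coe, ← Quaternion.coe_one]
  congr 1
  simp only [Pi.smul_apply, Quaternion.normSq_smul, ← Finset.mul_sum]
  rw [inv_pow, Real.sq_sqrt hpos.le, inv_mul_cancel₀ hpos.ne']

theorem exists_mem_unitary_star_mul_eq_coe (a : ℍ[ℝ]) :
    ∃ q ∈ unitary ℍ[ℝ], ∃ r : ℝ, star q * a = r := by
  rcases eq_or_ne a 0 with rfl | ha
  · exact ⟨1, one_mem _, 0, by simp⟩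
  have hnorm : ‖a‖ ≠ 0 := norm_ne_zero_iff.2 ha
  have hq : Quaternion.normSq (‖a‖⁻¹ • a) = 1 := by
    rw [Quaternion.normSq_smul, Quaternion.normSq_eq_norm_mul_self]
    field_simp
  refine ⟨‖a‖⁻¹ • a, Unitary.mem_iff.2 ⟨?_, ?_⟩, ‖a‖, ?_⟩
  · rw [Quaternion.star_mul_self, hq, Quaternion.coe_one]
  · rw [Quaternion.self_mul_star, hq, Quaternion.coe_one]
  · rw [Quaternion.star_smul, smul_mul_assoc, Quaternion.star_mul_self, ← Quaternion.coe_smul,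
      Quaternion.normSq_eq_norm_mul_self, smul_eq_mul, inv_mul_cancel_left₀ hnorm]

variable [DecidableEq ι]

theorem exists_mem_unitary_col_eq {v : ι → ℍ[ℝ]} (hv : star v ⬝ᵥ v = 1) (k : ι) :
    ∃ U ∈ unitary (Matrix ι ι ℍ[ℝ]), U.col k = v := by
  obtain ⟨q, hq, r, hr⟩ := exists_mem_unitary_star_mul_eq_coe (v k)
  have hq1 : star q * q = 1 := Unitary.star_mul_self_of_mem hq
  have hdiag : diagonal (fun _ : ι => q) ∈ unitary (Matrix ι ι ℍ[ℝ]) := by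
    rw [Unitary.mem_iff, star_eq_conjTranspose, diagonal_conjTranspose]
    simp [Pi.star_def, hq1, Unitary.mul_star_self_of_mem hq]
  -- The phase `q` makes the inner product of `e` and `v` real, as the reflection requires.
  set e : ι → ℍ[ℝ] := Pi.single k q
  have hnorm : star e ⬝ᵥ e = star v ⬝ᵥ v := by simp [e, hv, hq1]
  have hev : star e ⬝ᵥ v = (r : ℍ[ℝ]) := by simp [e, hr]
  have hsymm : star e ⬝ᵥ v = star v ⬝ᵥ e := by
    rw [star_dotProduct v, hev, Quaternion.star_coe]
  suffices h : ∃ H ∈ unitary (Matrix ι ι ℍ[ℝ]), H *ᵥ e = v by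
    obtain ⟨H, hH, hHe⟩ := h
    refine ⟨H * diagonal (fun _ => q), mul_mem hH hdiag, ?_⟩
    rw [← mulVec_single_one, ← mulVec_mulVec, diagonal_mulVec_single, mul_one, hHe]
  rcases eq_or_ne e v with h | h
  · exact ⟨1, one_mem _, by rw [one_mulVec, h]⟩
  · exact ⟨householder (e - v), householder_mem_unitary _, householder_sub_mulVec hnorm hsymm
      (star_dotProduct_self_ne_zero (sub_ne_zero.2 h))⟩

end UnitColumn

section RightEigenvector

theorem cq_eq_coe (z : ℂ) : cq z = (z : ℍ[ℝ]) := rfl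

theorem cq_eq_ofComplex (z : ℂ) : cq z = Quaternion.ofComplex z := rfl

theorem exists_ne_zero_aeval_mul_eq_zero {K L B : Type*} [Field K] [Ring L] [Nontrivial L]
    [Algebra K L] [Ring B] [Algebra K B] {a : B} {z : L} (ha : IsIntegral K a)
    (hz : aeval z (minpoly K a) = 0) {t : K[X]} (ht : aeval z t = 0) :
    ∃ b : B, b ≠ 0 ∧ aeval a t * b = 0 := by
  obtain ⟨q, hq⟩ := minpoly.dvd K z hz
  have hq0 : q ≠ 0 := right_ne_zero_of_mul (hq ▸ minpoly.ne_zero ha)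
  refine ⟨aeval a q, fun haq => minpoly.not_isUnit K z ?_, ?_⟩
  · have hdvd : minpoly K z * q ∣ 1 * q := by
      rw [← hq, one_mul]
      exact minpoly.dvd K a haq
    exact isUnit_of_dvd_one ((mul_dvd_mul_iff_right hq0).1 hdvd)
  · obtain ⟨s, rfl⟩ := minpoly.dvd K z ht
    rw [← map_mul, mul_right_comm, ← hq, map_mul, minpoly.aeval, zero_mul]

variable {ι : Type*}

theorem real_smul_eq_op_smul (r : ℝ) (x : ι → ℍ[ℝ]) :
    r • x = MulOpposite.op (r : ℍ[ℝ]) • x :=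
  funext fun i => (Quaternion.mul_coe_eq_smul r (x i)).symm

theorem cq_conj_add_cq (z : ℂ) : cq (starRingEnd ℂ z) + cq z = ((2 * z.re : ℝ) : ℍ[ℝ]) := by
  ext <;> simp [cq_eq_coe, two_mul]

theorem cq_conj_mul_cq (z : ℂ) :
    cq (starRingEnd ℂ z) * cq z = (Complex.normSq z : ℍ[ℝ]) := by
  rw [cq_eq_ofComplex, cq_eq_ofComplex, ← map_mul, mul_comm, Complex.mul_conj]
  rfl

theorem exists_cq_conj_mul_eq_mul_cq (z : ℂ) :
    ∃ j : ℍ[ℝ], j ≠ 0 ∧ cq (starRingEnd ℂ z) * j = j * cq z := by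
  obtain ⟨j, hre, hI, hJ, hK⟩ : ∃ j : ℍ[ℝ], j.re = 0 ∧ j.imI = 0 ∧ j.imJ = 1 ∧ j.imK = 0 :=
    ⟨⟨0, 0, 1, 0⟩, rfl, rfl, rfl, rfl⟩
  refine ⟨j, fun h => by simp [h] at hJ, ?_⟩
  ext <;> simp [cq_eq_coe, hre, hI, hJ, hK]

variable [Fintype ι]

theorem exists_mulVec_eq_op_cq_smul_of_quadratic {A : Matrix ι ι ℍ[ℝ]} {z : ℂ} {v : ι → ℍ[ℝ]}
    (hv : v ≠ 0) (h : A *ᵥ A *ᵥ v - (2 * z.re) • A *ᵥ v + Complex.normSq z • v = 0) :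
    ∃ u : ι → ℍ[ℝ], u ≠ 0 ∧ A *ᵥ u = MulOpposite.op (cq z) • u := by
  -- Right multiplication by `z` and by its conjugate factors the quadratic: `(A - c)(A - d)v = 0`.
  set c := MulOpposite.op (cq z)
  set d := MulOpposite.op (cq (starRingEnd ℂ z))
  have hAA : A *ᵥ A *ᵥ v = d • A *ᵥ v + c • A *ᵥ v - (c * d) • v := by
    rw [← add_smul, ← MulOpposite.op_add, ← MulOpposite.op_mul, cq_conj_add_cq, cq_conj_mul_cq,
      ← real_smul_eq_op_smul, ← real_smul_eq_op_smul, ← sub_eq_zero, ← h]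
    abel
  by_cases hu : A *ᵥ v - d • v = 0
  · obtain ⟨j, hj, hcomm⟩ := exists_cq_conj_mul_eq_mul_cq z
    refine ⟨MulOpposite.op j • v, smul_ne_zero ((MulOpposite.op_ne_zero_iff j).2 hj) hv, ?_⟩
    rw [mulVec_smul, sub_eq_zero.1 hu, smul_smul, smul_smul, ← MulOpposite.op_mul,
      ← MulOpposite.op_mul, hcomm]
  · refine ⟨A *ᵥ v - d • v, hu, ?_⟩
    rw [mulVec_sub, mulVec_smul, hAA, smul_sub, smul_smul]
    abel

variable [DecidableEq ι]

theorem exists_mulVec_eq_op_cq_smul {A : Matrix ι ι ℍ[ℝ]} {z : ℂ}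
    (hz : aeval z (minpoly ℝ A) = 0) :
    ∃ u : ι → ℍ[ℝ], u ≠ 0 ∧ A *ᵥ u = MulOpposite.op (cq z) • u := by
  have ht : aeval z (X ^ 2 - C (2 * z.re) * X + C (Complex.normSq z)) = 0 := by
    rw [map_add, map_sub, map_mul, map_pow, aeval_X, aeval_C, aeval_C, Complex.coe_algebraMap,
      ← Complex.mul_conj, ← Complex.add_conj]
    ring
  obtain ⟨B, hB, hAB⟩ := exists_ne_zero_aeval_mul_eq_zero (Algebra.IsIntegral.isIntegral A) hz ht
  obtain ⟨k, hk⟩ : ∃ k, B.col k ≠ 0 := by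
    by_contra! hcol
    exact hB (ext_col hcol)
  refine exists_mulVec_eq_op_cq_smul_of_quadratic hk ?_
  have htk : aeval A (X ^ 2 - C (2 * z.re) * X + C (Complex.normSq z)) *ᵥ B.col k = 0 := by
    rw [← mulVec_single_one, mulVec_mulVec, hAB, zero_mulVec]
  rwa [map_add, map_sub, map_mul, map_pow, aeval_X, aeval_C, aeval_C, ← Algebra.smul_def,
    Algebra.algebraMap_eq_smul_one, add_mulVec, sub_mulVec, smul_mulVec, smul_mulVec, one_mulVec,
    pow_two, ← mulVec_mulVec] at htk

end RightEigenvector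

section Deflation

theorem exists_mem_unitary_conj_col_eq {ι : Type*} [Fintype ι] [DecidableEq ι]
    {A : Matrix ι ι ℍ[ℝ]} {z : ℂ} (hz : aeval z (minpoly ℝ A) = 0) (k : ι) :
    ∃ U ∈ unitary (Matrix ι ι ℍ[ℝ]), (Uᴴ * A * U).col k = Pi.single k (cq z) := by
  obtain ⟨u, hu, hAu⟩ := exists_mulVec_eq_op_cq_smul hz
  obtain ⟨r, hr⟩ := exists_smul_star_dotProduct_eq_one hu
  obtain ⟨U, hU, hcol⟩ := exists_mem_unitary_col_eq hr k
  have hUcol : Uᴴ *ᵥ U.col k = Pi.single k 1 := by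
    rw [← mulVec_single_one, mulVec_mulVec, ← star_eq_conjTranspose,
      Unitary.star_mul_self_of_mem hU, one_mulVec]
  have hAcol : A *ᵥ U.col k = MulOpposite.op (cq z) • U.col k := by
    rw [hcol, mulVec_smul, hAu, smul_comm]
  refine ⟨U, hU, ?_⟩
  rw [← mulVec_single_one, ← mulVec_mulVec, ← mulVec_mulVec, mulVec_single_one, hAcol, mulVec_smul,
    hUcol, ← Pi.single_smul]
  simp

theorem minpoly_star_mul_mul {K B : Type*} [Field K] [Ring B] [StarRing B] [Algebra K B] {u : B}
    (hu : u ∈ unitary B) (a : B) : minpoly K (star u * a * u) = minpoly K a := by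
  have h := minpoly.algEquiv_eq (Unitary.conjStarAlgAut K B (star ⟨u, hu⟩)).toAlgEquiv a
  simpa using h

end Deflation

section Triangular

variable {ι K R : Type*} [Fintype ι] [LinearOrder ι] [CommSemiring K] [Semiring R] [Algebra K R]

theorem mul_apply_self_of_blockTriangular {M N : Matrix ι ι R} (hM : M.BlockTriangular id)
    (hN : N.BlockTriangular id) (i : ι) : (M * N) i i = M i i * N i i := by
  rw [mul_apply]
  refine Finset.sum_eq_single i (fun j _ hji => ?_) (by simp)
  rcases hji.lt_or_gt with h | h
  · rw [hM h, zero_mul]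
  · rw [hN h, mul_zero]

/-- The `i`-th diagonal entry, which is multiplicative on upper triangular matrices. -/
def diagEntry (i : ι) : blockTriangularSubalgebra K R (id : ι → ι) →ₐ[K] R where
  toFun M := M.1 i i
  map_one' := by simp
  map_mul' M N := mul_apply_self_of_blockTriangular M.2 N.2 i
  map_zero' := rfl
  map_add' _ _ := rfl
  commutes' r := by simp [algebraMap_matrix_apply]

theorem aeval_apply_self_of_blockTriangular {T : Matrix ι ι R} (hT : T.BlockTriangular id)
    (p : K[X]) (i : ι) : aeval T p i i = aeval (T i i) p := by
  let S : blockTriangularSubalgebra K R (id : ι → ι) := ⟨T, hT⟩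
  calc aeval T p i i = diagEntry i (aeval S p) :=
        congrFun₂ (aeval_algHom_apply (blockTriangularSubalgebra K R id).val S p) i i
    _ = aeval (T i i) p := (aeval_algHom_apply (diagEntry i) S p).symm

theorem aeval_minpoly_eq_zero_of_blockTriangular {T : Matrix ι ι ℍ[ℝ]}
    (hT : T.BlockTriangular id) {i : ι} {z : ℂ} (hz : T i i = cq z) :
    aeval z (minpoly ℝ T) = 0 := by
  have h := aeval_apply_self_of_blockTriangular hT (minpoly ℝ T) i
  rw [minpoly.aeval, hz, cq_eq_ofComplex, aeval_algHom_apply] at h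
  exact (map_eq_zero (Quaternion.ofComplex : ℂ →ₐ[ℝ] ℍ[ℝ])).1 h.symm

end Triangular

section BlockOne

variable {n : ℕ} {R : Type*}

/-- The block diagonal matrix with diagonal blocks `1` and `V`. -/
def blockOne [Zero R] [One R] (V : Matrix (Fin n) (Fin n) R) :
    Matrix (Fin (n + 1)) (Fin (n + 1)) R :=
  Matrix.of (Fin.cons (Fin.cons 1 0) fun i => Fin.cons 0 (V i))

variable [Semiring R]

theorem blockOne_one : blockOne (1 : Matrix (Fin n) (Fin n) R) = 1 := by
  ext i j
  cases i using Fin.cases <;> cases j using Fin.cases <;>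
    simp [blockOne, one_apply, Fin.succ_ne_zero, (Fin.succ_ne_zero _).symm]

theorem blockOne_mul (V W : Matrix (Fin n) (Fin n) R) :
    blockOne (V * W) = blockOne V * blockOne W := by
  ext i j
  cases i using Fin.cases <;> cases j using Fin.cases <;>
    simp [blockOne, mul_apply, Fin.sum_univ_succ]

theorem blockOne_conjTranspose [StarRing R] (V : Matrix (Fin n) (Fin n) R) :
    blockOne Vᴴ = (blockOne V)ᴴ := by
  ext i j
  cases i using Fin.cases <;> cases j using Fin.cases <;> simp [blockOne]

theorem blockOne_mem_unitary [StarRing R] {V : Matrix (Fin n) (Fin n) R}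
    (hV : V ∈ unitary (Matrix (Fin n) (Fin n) R)) :
    blockOne V ∈ unitary (Matrix (Fin (n + 1)) (Fin (n + 1)) R) := by
  simp only [Unitary.mem_iff, star_eq_conjTranspose] at hV ⊢
  simp only [← blockOne_conjTranspose, ← blockOne_mul, hV, blockOne_one, and_self]

variable (V W : Matrix (Fin n) (Fin n) R) (M : Matrix (Fin (n + 1)) (Fin (n + 1)) R)

theorem submatrix_blockOne_mul_mul_blockOne :
    (blockOne V * M * blockOne W).submatrix Fin.succ Fin.succ =
      V * M.submatrix Fin.succ Fin.succ * W := by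
  ext i j
  simp [blockOne, mul_apply, Fin.sum_univ_succ]

variable {M} in
theorem col_blockOne_mul_mul_blockOne {a : R} (hM : M.col 0 = Pi.single 0 a) :
    (blockOne V * M * blockOne W).col 0 = Pi.single 0 a := by
  have hcol (X : Matrix (Fin n) (Fin n) R) : (blockOne X).col 0 = Pi.single 0 1 := by
    ext i
    cases i using Fin.cases <;> simp [blockOne]
  rw [← mulVec_single_one, ← mulVec_mulVec, ← mulVec_mulVec, mulVec_single_one, hcol,
    mulVec_single_one, hM, mulVec_single, hcol, ← Pi.single_smul]
  simp

end BlockOne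

section SchurForm

theorem blockTriangular_of_col_zero {n : ℕ} {R : Type*} [Zero R]
    {T : Matrix (Fin (n + 1)) (Fin (n + 1)) R} {a : R} (hcol : T.col 0 = Pi.single 0 a)
    (hT : (T.submatrix Fin.succ Fin.succ).BlockTriangular id) : T.BlockTriangular id := by
  intro i j hij
  obtain ⟨i, rfl⟩ := Fin.exists_succ_eq.2 (Fin.ne_zero_of_lt hij)
  cases j using Fin.cases with
  | zero => simpa using congrFun hcol i.succ
  | succ j => exact hT (Fin.succ_lt_succ_iff.1 hij)

/-- `T` is in Schur form with diagonal `lam`: it is upper triangular, and its diagonal entries are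
complex numbers with nonnegative imaginary parts in `⪰`-decreasing order. -/
structure IsSchurForm {n : ℕ} (T : Matrix (Fin n) (Fin n) ℍ[ℝ]) (lam : Fin n → ℂ) : Prop where
  blockTriangular : T.BlockTriangular id
  diag_eq : ∀ i, T i i = cq (lam i)
  im_nonneg : ∀ i, 0 ≤ (lam i).im
  csucceq_of_le : ∀ ⦃i j⦄, i ≤ j → csucceq (lam i) (lam j)

theorem IsSchurForm.cons {n : ℕ} {T : Matrix (Fin (n + 1)) (Fin (n + 1)) ℍ[ℝ]} {z : ℂ}
    {lam : Fin n → ℂ} (h : IsSchurForm (T.submatrix Fin.succ Fin.succ) lam)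
    (hcol : T.col 0 = Pi.single 0 (cq z)) (hz : 0 ≤ z.im)
    (hmax : ∀ w, aeval w (minpoly ℝ T) = 0 → 0 ≤ w.im → csucceq z w) :
    IsSchurForm T (Fin.cons z lam) := by
  have htri : T.BlockTriangular id := blockTriangular_of_col_zero hcol h.blockTriangular
  have hdiag : ∀ i, T i i = cq ((Fin.cons z lam : Fin (n + 1) → ℂ) i) :=
    Fin.cases (by simpa using congrFun hcol 0) h.diag_eq
  have him : ∀ i, 0 ≤ ((Fin.cons z lam : Fin (n + 1) → ℂ) i).im := Fin.cases hz h.im_nonneg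
  refine ⟨htri, hdiag, him, fun i j hij => ?_⟩
  cases i using Fin.cases with
  | zero => exact hmax _ (aeval_minpoly_eq_zero_of_blockTriangular htri (hdiag j)) (him j)
  | succ i =>
    obtain ⟨j, rfl⟩ := Fin.exists_succ_eq.2 (Fin.ne_zero_of_lt (i.succ_pos.trans_le hij))
    exact h.csucceq_of_le (Fin.succ_le_succ_iff.1 hij)

theorem exists_isSchurForm {n : ℕ} (A : Matrix (Fin n) (Fin n) ℍ[ℝ]) :
    ∃ U ∈ unitary (Matrix (Fin n) (Fin n) ℍ[ℝ]), ∃ lam, IsSchurForm (Uᴴ * A * U) lam := by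
  induction n with
  | zero => exact ⟨1, one_mem _, 0, ⟨fun i => i.elim0, fun i => i.elim0, fun i => i.elim0,
      fun i => i.elim0⟩⟩
  | succ n ih =>
    obtain ⟨z, hz, hz0, hmax⟩ :=
      exists_csucceq_root (minpoly.degree_pos (Algebra.IsIntegral.isIntegral (R := ℝ) A))
    obtain ⟨U, hU, hcol⟩ := exists_mem_unitary_conj_col_eq hz 0
    obtain ⟨V, hV, lam, hlam⟩ := ih ((Uᴴ * A * U).submatrix Fin.succ Fin.succ)
    have hW : U * blockOne V ∈ unitary _ := mul_mem hU (blockOne_mem_unitary hV)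
    have hconj : (U * blockOne V)ᴴ * A * (U * blockOne V) =
        blockOne Vᴴ * (Uᴴ * A * U) * blockOne V := by
      simp only [conjTranspose_mul, blockOne_conjTranspose, Matrix.mul_assoc]
    refine ⟨U * blockOne V, hW, Fin.cons z lam, .cons ?_ ?_ hz0 ?_⟩
    · rwa [hconj, submatrix_blockOne_mul_mul_blockOne]
    · rw [hconj]
      exact col_blockOne_mul_mul_blockOne _ _ hcol
    · rwa [← star_eq_conjTranspose, minpoly_star_mul_mul hW]

end SchurForm

/-- **Schur's theorem for quaternion matrices.** Every square quaternion matrix is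
unitarily similar to an upper triangular matrix whose diagonal entries are complex numbers
with nonnegative imaginary parts, arranged in `⪰`-decreasing order down the diagonal. -/
theorem quaternion_schur_triangularization {n : ℕ} (A : Matrix (Fin n) (Fin n) ℍ[ℝ]) :
    ∃ (U : Matrix (Fin n) (Fin n) ℍ[ℝ]) (lam : Fin n → ℂ),
      IsUnitaryM U ∧
      (∀ r c : Fin n, c < r → (Uᴴ * A * U) r c = 0) ∧
      (∀ l, (Uᴴ * A * U) l l = cq (lam l)) ∧
      (∀ l, 0 ≤ (lam l).im) ∧
      (∀ (l : ℕ) (h : l + 1 < n),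
        csucceq (lam ⟨l, Nat.lt_of_succ_lt h⟩) (lam ⟨l + 1, h⟩)) := by
  obtain ⟨U, hU, lam, hT⟩ := exists_isSchurForm A
  exact ⟨U, lam, Unitary.star_mul_self_of_mem hU, fun _ _ hcr => hT.blockTriangular hcr,
    hT.diag_eq, hT.im_nonneg, fun l _ => hT.csucceq_of_le (Fin.mk_le_mk.2 l.le_succ)⟩
end
end
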